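/- Let m ≤ 2^{k/20}, let f : {0,1}^m → {0,1}, and let D ⊆ {0,1}^m with |D| ≥ 2^{m−k/2}. For M ∈ 𝔽₂^{k×(m−k)}, let U_{M,D} and U_{m,D} be the conditional distributions of U_M and of the uniform distribution on {0,1}^m on the set D (taking U_{M,D} uniform on D if U_M has no mass on D). Then E_{M ∼ U_{k×(m−k)}}[ ‖f(U_{M,D}) − f(U_{m,D})‖ ] ≤ 2^{−k/9} (for all sufficiently large k). -/

import Mathlib

open Finset

/-!
For distinct `x, y ∈ 𝔽₂^k` with `x ≠ 0`, the vector `xᵀM` is uniform and independent of `yᵀM`.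
Hence, for `|g| ≤ 1`, the sum of `g` over the points of `D` on the graph of `x ↦ xᵀM`, minus
`2^{-(m-k)} ∑_D g`, is a sum of uncorrelated terms, one for each `x`. Its second moment is at most
`4 + t` with `t = |D| / 2^{m-k} ≥ 2^{k/2}`, where the `4` accounts for the deterministic term
`x = 0`. Apply this with `g = 1` and with `g = f - 𝔼_D f`: the graph meets `D` in `t ± O(√t)` points
on average, over which the centred `f` sums to `O(√t)`, so the two conditional means differ by
`O(1/√t) = O(2^{-k/4})`.
-/

open Matrix
open scoped BigOperators

section Expect

variable {α β : Type*}

lemma expect_abs_le_sqrt_expect_sq (s : Finset α) (f : α → ℝ) :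
    𝔼 i ∈ s, |f i| ≤ √(𝔼 i ∈ s, f i ^ 2) := by
  apply Real.le_sqrt_of_sq_le
  obtain rfl | hs := s.eq_empty_or_nonempty
  · simp
  · simpa [expect_const hs] using expect_mul_sq_le_sq_mul_sq s (fun i ↦ |f i|) 1

lemma expect_sq_balance_le [Fintype α] (f : α → ℝ) :
    𝔼 i, Fintype.balance f i ^ 2 ≤ 𝔼 i, f i ^ 2 := by
  obtain _ | _ := isEmpty_or_nonempty α
  · simp
  calc 𝔼 i, Fintype.balance f i ^ 2
      = 𝔼 i, (f i ^ 2 - 2 * (𝔼 j, f j) * f i + (𝔼 j, f j) ^ 2) := by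
        simp only [Fintype.balance_apply]
        exact expect_congr rfl fun i _ ↦ by ring
    _ = 𝔼 i, f i ^ 2 - (𝔼 i, f i) ^ 2 := by
        rw [expect_add_distrib, expect_sub_distrib, ← mul_expect, Fintype.expect_const]
        ring
    _ ≤ 𝔼 i, f i ^ 2 := sub_le_self _ (sq_nonneg _)

lemma expect_sq_sum_of_pairwise_uncorrelated [Fintype β] (s : Finset α)
    (Z : β → α → ℝ) (hZ : Pairwise fun x x' ↦ 𝔼 ω ∈ s, Z x ω * Z x' ω = 0) :
    𝔼 ω ∈ s, (∑ x, Z x ω) ^ 2 = ∑ x, 𝔼 ω ∈ s, Z x ω ^ 2 := by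
  simp only [sq, sum_mul_sum]
  rw [expect_sum_comm]
  refine sum_congr rfl fun x _ ↦ ?_
  rw [expect_sum_comm]
  exact sum_eq_single x (fun x' _ hx' ↦ hZ hx'.symm) (by simp)

lemma sum_filter_snd_eq_sum_indicator [Fintype α] [DecidableEq β] (D : Finset (α × β))
    (h : α → β) (g : α × β → ℝ) :
    ∑ z ∈ D with z.2 = h z.1, g z = ∑ x, (D : Set (α × β)).indicator g (x, h x) := by
  classical
  simp only [Set.indicator_apply, mem_coe, ← sum_filter]
  refine sum_nbij' Prod.fst (fun x ↦ (x, h x)) ?_ ?_ ?_ ?_ ?_ <;> aesop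

lemma sum_expect_indicator [Fintype α] [Fintype β] (D : Finset (α × β)) (g : α × β → ℝ) :
    ∑ x, 𝔼 y, (D : Set (α × β)).indicator g (x, y) = (∑ z ∈ D, g z) / Fintype.card β := by
  simp only [Fintype.expect_eq_sum_div_card, ← sum_div]
  rw [← Fintype.sum_prod_type, sum_indicator_subset g (subset_univ D)]

lemma abs_expect_sub_le_add_div {E : Finset α} (hE : E.Nonempty) {f : α → ℝ} {c t : ℝ}
    (hf : ∀ z ∈ E, |f z - c| ≤ 1) (ht : 0 < t) :
    |𝔼 z ∈ E, f z - c| ≤ (|∑ z ∈ E, (f z - c)| + |#E - t|) / t := by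
  have hcard : (0 : ℝ) < #E := by exact_mod_cast hE.card_pos
  set S := ∑ z ∈ E, (f z - c)
  have hSE : |S| ≤ #E := by
    simpa only [sum_const, nsmul_one] using (abs_sum_le_sum_abs _ _).trans (sum_le_sum hf)
  have hmean : 𝔼 z ∈ E, f z - c = S / #E := by
    rw [← expect_eq_sum_div_card, expect_sub_distrib, expect_const hE]
  have hgap : t - #E ≤ |#E - t| := by
    rw [abs_sub_comm]
    exact le_abs_self _
  rw [hmean, abs_div, abs_of_pos hcard, div_le_div_iff₀ hcard ht]
  calc |S| * t = |S| * #E + |S| * (t - #E) := by ring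
    _ ≤ |S| * #E + |S| * |#E - t| := by gcongr
    _ ≤ |S| * #E + #E * |#E - t| := by gcongr
    _ = (|S| + |#E - t|) * #E := by ring

end Expect

section RandomMatrix

variable {K ι κ : Type*} [Field K] [Fintype ι]

lemma exists_dotProduct_eq_one_of_notMem_span {x x' : ι → K} (hx : x ∉ K ∙ x') :
    ∃ u : ι → K, x ⬝ᵥ u = 1 ∧ x' ⬝ᵥ u = 0 := by
  classical
  obtain ⟨ℓ, hℓ, hℓx⟩ := LinearMap.exists_extend_of_notMem (0 : (K ∙ x') →ₗ[K] K) hx 1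
  obtain ⟨u, rfl⟩ := (dotProductEquiv K ι).surjective ℓ
  have hℓx' := LinearMap.congr_fun hℓ ⟨x', Submodule.mem_span_singleton_self x'⟩
  exact ⟨u, by simpa [dotProduct_comm] using hℓx, by simpa [dotProduct_comm] using hℓx'⟩

variable [DecidableEq ι] [Fintype κ] [DecidableEq κ]

lemma expect_vecMul_mul_vecMul [Fintype K] {x x' : ι → K} (hx : x ∉ K ∙ x')
    (φ ψ : (κ → K) → ℝ) :
    𝔼 M : Matrix ι κ K, φ (x ᵥ* M) * ψ (x' ᵥ* M) =
      (𝔼 y, φ y) * 𝔼 M : Matrix ι κ K, ψ (x' ᵥ* M) := by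
  obtain ⟨u, hu, hu'⟩ := exists_dotProduct_eq_one_of_notMem_span hx
  -- Adding `vecMulVec u w` to `M` translates `x ᵥ* M` by `w` and leaves `x' ᵥ* M` unchanged.
  have hshift (w : κ → K) : 𝔼 M : Matrix ι κ K, φ (x ᵥ* M) * ψ (x' ᵥ* M) =
      𝔼 M : Matrix ι κ K, φ (x ᵥ* M + w) * ψ (x' ᵥ* M) :=
    (Fintype.expect_equiv (Equiv.addRight (vecMulVec u w)) _ _ fun M ↦ by
      simp [vecMul_add, vecMul_vecMulVec, hu, hu']).symm
  calc 𝔼 M : Matrix ι κ K, φ (x ᵥ* M) * ψ (x' ᵥ* M)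
      = 𝔼 w : κ → K, 𝔼 M : Matrix ι κ K, φ (x ᵥ* M + w) * ψ (x' ᵥ* M) := by
        simp only [← hshift, Fintype.expect_const]
    _ = 𝔼 M : Matrix ι κ K, (𝔼 w, φ (x ᵥ* M + w)) * ψ (x' ᵥ* M) := by
        simp only [expect_comm (s := (univ : Finset (κ → K))), expect_mul]
    _ = (𝔼 y, φ y) * 𝔼 M : Matrix ι κ K, ψ (x' ᵥ* M) := by
        rw [mul_expect]
        refine expect_congr rfl fun M _ ↦ congrArg (· * _) ?_
        exact Fintype.expect_equiv (Equiv.addLeft (x ᵥ* M)) _ _ fun _ ↦ rfl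

lemma expect_vecMul [Fintype K] {x : ι → K} (hx : x ≠ 0) (φ : (κ → K) → ℝ) :
    𝔼 M : Matrix ι κ K, φ (x ᵥ* M) = 𝔼 y, φ y := by
  have hsplit := expect_vecMul_mul_vecMul (x' := 0) (by simpa using hx) φ fun _ ↦ 1
  simpa only [mul_one, Fintype.expect_const] using hsplit

end RandomMatrix

section ZModTwo

lemma notMem_span_singleton_zmod_two {V : Type*} [AddCommGroup V] [Module (ZMod 2) V] {x x' : V}
    (hx : x ≠ 0) (hne : x ≠ x') : x ∉ ZMod 2 ∙ x' := by
  rw [Submodule.mem_span_singleton]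
  rintro ⟨a, rfl⟩
  obtain rfl | rfl := (by decide : ∀ a : ZMod 2, a = 0 ∨ a = 1) a
  · exact hx (zero_smul _ x')
  · exact hne (one_smul _ x')

variable {ι κ : Type*} [Fintype ι] [DecidableEq ι] [Fintype κ] [DecidableEq κ]

lemma expect_sq_sum_vecMul_of_expect_eq_zero {h : (ι → ZMod 2) → (κ → ZMod 2) → ℝ}
    (h_mean : ∀ x, 𝔼 y, h x y = 0) :
    𝔼 M : Matrix ι κ (ZMod 2), (∑ x, h x (x ᵥ* M)) ^ 2 =
      h 0 0 ^ 2 + ∑ x with x ≠ 0, 𝔼 y, h x y ^ 2 := by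
  have huncorr_of_ne_zero {x x' : ι → ZMod 2} (hx : x ≠ 0) (hne : x ≠ x') :
      𝔼 M : Matrix ι κ (ZMod 2), h x (x ᵥ* M) * h x' (x' ᵥ* M) = 0 := by
    rw [expect_vecMul_mul_vecMul (notMem_span_singleton_zmod_two hx hne), h_mean, zero_mul]
  have huncorr : Pairwise fun x x' : ι → ZMod 2 ↦
      𝔼 M : Matrix ι κ (ZMod 2), h x (x ᵥ* M) * h x' (x' ᵥ* M) = 0 := by
    intro x x' hne
    obtain rfl | hx := eq_or_ne x 0
    · simpa only [mul_comm] using huncorr_of_ne_zero hne.symm hne.symm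
    · exact huncorr_of_ne_zero hx hne
  rw [expect_sq_sum_of_pairwise_uncorrelated _ _ huncorr, ← add_sum_erase _ _ (mem_univ 0),
    filter_ne']
  congr 1
  · simp
  · exact sum_congr rfl fun x hx ↦ expect_vecMul (ne_of_mem_erase hx) fun y ↦ h x y ^ 2

lemma expect_sq_sum_balance_vecMul_le {G : (ι → ZMod 2) → (κ → ZMod 2) → ℝ}
    (hG : ∀ y, |G 0 y| ≤ 1) :
    𝔼 M : Matrix ι κ (ZMod 2), (∑ x, Fintype.balance (G x) (x ᵥ* M)) ^ 2 ≤
      4 + ∑ x, 𝔼 y, G x y ^ 2 := by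
  have hmean : |𝔼 y, G 0 y| ≤ 1 :=
    (abs_expect_le _ _).trans (expect_le univ_nonempty fun y _ ↦ hG y)
  have hzero : Fintype.balance (G 0) 0 ^ 2 ≤ 4 := by
    rw [Fintype.balance_apply, show (4 : ℝ) = 2 ^ 2 by norm_num, sq_le_sq, abs_two]
    linarith [abs_sub (G 0 0) (𝔼 y, G 0 y), hG 0]
  rw [expect_sq_sum_vecMul_of_expect_eq_zero fun x ↦ Fintype.expect_balance (G x)]
  gcongr
  calc ∑ x with x ≠ 0, 𝔼 y, Fintype.balance (G x) y ^ 2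
      ≤ ∑ x, 𝔼 y, Fintype.balance (G x) y ^ 2 :=
        sum_le_univ_sum_of_nonneg fun x ↦ expect_nonneg fun y _ ↦ sq_nonneg _
    _ ≤ ∑ x, 𝔼 y, G x y ^ 2 := sum_le_sum fun x _ ↦ expect_sq_balance_le (G x)

end ZModTwo

section GraphSlice

variable {ι κ : Type*} [Fintype ι] [Fintype κ]

/-- The points of `D` on the graph of `x ↦ x ᵥ* M`. The uniform distribution on it is `U_{M,D}`. -/
def graphSlice (D : Finset ((ι → ZMod 2) × (κ → ZMod 2))) (M : Matrix ι κ (ZMod 2)) :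
    Finset ((ι → ZMod 2) × (κ → ZMod 2)) :=
  {z ∈ D | z.2 = z.1 ᵥ* M}

/-- The difference between the means of `f` under `U_{M,D}` and under the uniform distribution on
`D`. For `f` with values in `{0, 1}` this is the total variation distance of the two pushforwards
along `f`. It is `0` when the graph of `M` misses `D`, since `U_{M,D}` is then uniform on `D`. -/
noncomputable def sliceBias (D : Finset ((ι → ZMod 2) × (κ → ZMod 2)))
    (f : (ι → ZMod 2) × (κ → ZMod 2) → ℝ) (M : Matrix ι κ (ZMod 2)) : ℝ :=
  if (graphSlice D M).Nonempty then |𝔼 z ∈ graphSlice D M, f z - 𝔼 z ∈ D, f z| else 0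

variable [DecidableEq ι] [DecidableEq κ]
  {D : Finset ((ι → ZMod 2) × (κ → ZMod 2))} {f g : (ι → ZMod 2) × (κ → ZMod 2) → ℝ}

lemma expect_sq_sum_graphSlice_sub_le (hg : ∀ z ∈ D, |g z| ≤ 1) :
    𝔼 M : Matrix ι κ (ZMod 2),
        (∑ z ∈ graphSlice D M, g z - (∑ z ∈ D, g z) / 2 ^ Fintype.card κ) ^ 2 ≤
      4 + (#D : ℝ) / 2 ^ Fintype.card κ := by
  have hdev (M : Matrix ι κ (ZMod 2)) :
      ∑ z ∈ graphSlice D M, g z - (∑ z ∈ D, g z) / 2 ^ Fintype.card κ =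
        ∑ x, Fintype.balance (fun y ↦ (D : Set _).indicator g (x, y)) (x ᵥ* M) := by
    simp only [Fintype.balance_apply, sum_sub_distrib, sum_expect_indicator, graphSlice,
      sum_filter_snd_eq_sum_indicator D (· ᵥ* M), Fintype.card_fun, ZMod.card, Nat.cast_pow,
      Nat.cast_ofNat]
  have hind (z) : (D : Set _).indicator g z ^ 2 ≤ (D : Set _).indicator 1 z := by
    by_cases hz : z ∈ D <;> simp [hz, hg]
  have habs (z) : |(D : Set _).indicator g z| ≤ 1 := by
    by_cases hz : z ∈ D <;> simp [hz, hg]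
  simp only [hdev]
  refine (expect_sq_sum_balance_vecMul_le fun y ↦ habs (0, y)).trans ?_
  gcongr
  calc ∑ x, 𝔼 y, (D : Set _).indicator g (x, y) ^ 2
      ≤ ∑ x, 𝔼 y, (D : Set _).indicator 1 (x, y) :=
        sum_le_sum fun x _ ↦ expect_le_expect fun y _ ↦ hind (x, y)
    _ = #D / 2 ^ Fintype.card κ := by simp [sum_expect_indicator]

lemma expect_abs_sum_graphSlice_sub_le (hg : ∀ z ∈ D, |g z| ≤ 1) :
    𝔼 M, |∑ z ∈ graphSlice D M, g z - (∑ z ∈ D, g z) / 2 ^ Fintype.card κ| ≤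
      √(4 + #D / 2 ^ Fintype.card κ) :=
  (expect_abs_le_sqrt_expect_sq _ _).trans
    (Real.sqrt_le_sqrt (expect_sq_sum_graphSlice_sub_le hg))

lemma expect_sliceBias_le (hD : D.Nonempty) (hf : ∀ z ∈ D, f z ∈ Set.Icc 0 1) :
    𝔼 M, sliceBias D f M ≤
      2 * √(4 + #D / 2 ^ Fintype.card κ) / (#D / 2 ^ Fintype.card κ) := by
  set c := 𝔼 z ∈ D, f z with hc
  set t : ℝ := #D / 2 ^ Fintype.card κ
  have ht_pos : 0 < t := by have := hD.card_pos; positivity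
  have hcentered : ∀ z ∈ D, |f z - c| ≤ 1 := by
    have hc_nonneg : 0 ≤ c := expect_nonneg fun z hz ↦ (hf z hz).1
    have hc_le_one : c ≤ 1 := expect_le hD fun z hz ↦ (hf z hz).2
    intro z hz
    rw [abs_le]
    constructor <;> linarith [(hf z hz).1, (hf z hz).2]
  have hsum : 𝔼 M, |∑ z ∈ graphSlice D M, (f z - c)| ≤ √(4 + t) := by
    have hcenter : ∑ z ∈ D, (f z - c) = 0 := by
      rw [sum_sub_distrib, sum_const, nsmul_eq_mul, hc, card_mul_expect, sub_self]
    simpa only [hcenter, zero_div, sub_zero] using expect_abs_sum_graphSlice_sub_le hcentered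
  have hcard : 𝔼 M, |#(graphSlice D M) - t| ≤ √(4 + t) := by
    simpa using expect_abs_sum_graphSlice_sub_le (D := D) (g := 1) (by simp)
  calc 𝔼 M, sliceBias D f M
      ≤ 𝔼 M, (|∑ z ∈ graphSlice D M, (f z - c)| + |#(graphSlice D M) - t|) / t := by
        refine expect_le_expect fun M _ ↦ ?_
        unfold sliceBias
        split_ifs with hM
        · exact abs_expect_sub_le_add_div hM
            (fun z hz ↦ hcentered z (filter_subset _ _ hz)) ht_pos
        · positivity
    _ = (𝔼 M, |∑ z ∈ graphSlice D M, (f z - c)| + 𝔼 M, |#(graphSlice D M) - t|) / t := by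
        rw [← expect_div, expect_add_distrib]
    _ ≤ 2 * √(4 + t) / t := by
        gcongr
        linarith

lemma expect_sliceBias_eq_sum (D : Finset ((ι → ZMod 2) × (κ → ZMod 2)))
    (f : (ι → ZMod 2) × (κ → ZMod 2) → ℝ) :
    𝔼 M, sliceBias D f M =
      (1 / (2 : ℝ) ^ (Fintype.card ι * Fintype.card κ)) * ∑ M : ι → κ → ZMod 2,
        if (graphSlice D M).Nonempty then
          |(∑ z ∈ graphSlice D M, f z) / #(graphSlice D M) - (∑ z ∈ D, f z) / #D|
        else 0 := by
  have hcard : (Fintype.card (Matrix ι κ (ZMod 2)) : ℝ) =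
      2 ^ (Fintype.card ι * Fintype.card κ) := by
    rw [Fintype.card_congr Matrix.of.symm]
    simp [pow_mul']
  simp only [sliceBias, expect_eq_sum_div_card, card_univ, hcard, one_div_mul_eq_div]
  rfl

end GraphSlice

lemma two_mul_sqrt_four_add_div_le_rpow {k t : ℝ} (hk : 15 ≤ k) (ht : (2 : ℝ) ^ (k / 2) ≤ t) :
    2 * √(4 + t) / t ≤ 2 ^ (-k / 9) := by
  have hsqrt : (2 : ℝ) ^ (k / 4) ≤ √t := by
    apply Real.le_sqrt_of_sq_le
    rwa [← Real.rpow_mul_natCast zero_le_two, Nat.cast_ofNat, show k / 4 * 2 = k / 2 by ring]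
  have hfour : (4 : ℝ) ≤ 2 ^ (-k / 9) * √t :=
    calc (4 : ℝ) = 2 ^ (2 : ℝ) := by norm_num
      _ ≤ 2 ^ (-k / 9 + k / 4) := Real.rpow_le_rpow_of_exponent_le one_le_two (by linarith)
      _ = 2 ^ (-k / 9) * 2 ^ (k / 4) := Real.rpow_add two_pos _ _
      _ ≤ 2 ^ (-k / 9) * √t := by gcongr
  have htwo : 2 ≤ t :=
    calc (2 : ℝ) = 2 ^ (1 : ℝ) := by norm_num
      _ ≤ 2 ^ (k / 2) := Real.rpow_le_rpow_of_exponent_le one_le_two (by linarith)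
      _ ≤ t := ht
  rw [div_le_iff₀ (by linarith)]
  calc 2 * √(4 + t) ≤ 2 * √(2 ^ 2 * t) := by gcongr; linarith
    _ = 4 * √t := by rw [Real.sqrt_mul (by norm_num), Real.sqrt_sq zero_le_two]; ring
    _ ≤ 2 ^ (-k / 9) * √t * √t := by gcongr
    _ = 2 ^ (-k / 9) * t := by rw [mul_assoc, Real.mul_self_sqrt (by linarith)]

theorem stmt12_general {ι κ : Type*} [Fintype ι] [DecidableEq ι] [Fintype κ] [DecidableEq κ]
    (hι : 15 ≤ Fintype.card ι) {D : Finset ((ι → ZMod 2) × (κ → ZMod 2))}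
    (hD : (2 : ℝ) ^ ((Fintype.card κ : ℝ) + (Fintype.card ι : ℝ) / 2) ≤ #D)
    {f : (ι → ZMod 2) × (κ → ZMod 2) → ℝ} (hf : ∀ z ∈ D, f z ∈ Set.Icc 0 1) :
    𝔼 M, sliceBias D f M ≤ 2 ^ (-(Fintype.card ι : ℝ) / 9) := by
  have hD_pos : (0 : ℝ) < #D := (Real.rpow_pos_of_pos two_pos _).trans_le hD
  have hdensity : (2 : ℝ) ^ ((Fintype.card ι : ℝ) / 2) ≤ #D / 2 ^ Fintype.card κ := by
    rwa [le_div_iff₀ (by positivity), ← Real.rpow_natCast, ← Real.rpow_add two_pos, add_comm]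
  exact (expect_sliceBias_le (card_pos.mp (by exact_mod_cast hD_pos)) hf).trans
    (two_mul_sqrt_four_add_div_le_rpow (by exact_mod_cast hι) hdensity)

/-- for all sufficiently large `k`, for any `m ≤ 2^{k/20}`,
`D ⊆ {0,1}^m` with `|D| ≥ 2^{m−k/2}`, and Boolean `f`,
`E_{M}[‖f(U_{M,D}) − f(U_{m,D})‖] ≤ 2^{−k/9}` (the distance is `0` when `U_M` has no
mass on `D`, per the convention `U_{M,D} = U_{m,D}` then). -/
theorem stmt12 : ∃ K : ℕ, ∀ k ≥ K, ∀ m : ℕ, k ≤ m → (m:ℝ) ≤ 2 ^ ((k:ℝ)/20) →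
    ∀ D : Finset ((Fin k → ZMod 2) × (Fin (m - k) → ZMod 2)),
    (2:ℝ) ^ ((m:ℝ) - (k:ℝ)/2) ≤ D.card →
    ∀ f : ((Fin k → ZMod 2) × (Fin (m - k) → ZMod 2)) → Bool,
    (1 / (2:ℝ) ^ (k * (m - k))) * ∑ M : Fin k → Fin (m - k) → ZMod 2,
      (if (D.filter (fun z => z.2 = fun j => ∑ i, z.1 i * M i j)).Nonempty then
        |(∑ z ∈ D.filter (fun z => z.2 = fun j => ∑ i, z.1 i * M i j),
            if f z then (1:ℝ) else 0) /
          (D.filter (fun z => z.2 = fun j => ∑ i, z.1 i * M i j)).card -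
          (∑ z ∈ D, if f z then (1:ℝ) else 0) / D.card|
      else 0)
    ≤ (2:ℝ) ^ (-(k:ℝ)/9) := by
  refine ⟨15, fun k hk m hkm _ D hD f ↦ ?_⟩
  have hexp : ((m - k : ℕ) : ℝ) + (k : ℝ) / 2 = m - k / 2 := by rw [Nat.cast_sub hkm]; ring
  have hbias : 𝔼 M, sliceBias D (fun z ↦ if f z then 1 else 0) M ≤ 2 ^ (-(k : ℝ) / 9) := by
    simpa using stmt12_general (D := D) (by simpa using hk) (by simpa [hexp] using hD)
      fun z _ ↦ by split_ifs <;> simp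
  simpa only [expect_sliceBias_eq_sum, Fintype.card_fin] using! hbias
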